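/- arXiv:1611.08985 — 2 statements merged into one kernel-verified Lean document; each statement's English description precedes it below -/
import Mathlib

section
/- Franke embedding, constant exponents, sequence-space version: Let n ∈ ℕ, −∞ < s₁ < s₀ < ∞, 0 < p₀ < p₁ < ∞ and 0 < q ≤ ∞ with s₀ − n/p₀ = s₁ − n/p₁. Then there exists a constant C > 0 such that for every complex-valued sequence γ = (γ_{j,m})_{j∈ℕ₀, m∈ℤⁿ} one has ‖γ | f^{s₁}_{p₁,q}(ℝⁿ)‖ ≤ C ‖γ | b^{s₀}_{p₀,p₁}(ℝⁿ)‖; that is, b^{s₀}_{p₀,p₁}(ℝⁿ) ↪ f^{s₁}_{p₁,q}(ℝⁿ). -/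
/-!
Write `g_j = 2^{j s₁} ∑_m |γ_{j,m}| χ_{j,m}`, `b_j = 2^{j s₀} ‖∑_m |γ_{j,m}| χ_{j,m}‖_{p₀}`,
`u_j = g_j^{p₁}`, `v_j = b_j^{p₁}`, `θ = p₀ / p₁ < 1` and `D = 2^n ≥ 2`. Because a layer is constant
on cubes of measure `D^{-j}` and `s₀ - n/p₀ = s₁ - n/p₁`, one has

* `u_j ≤ D^j v_j` pointwise (`levelFun_le`), and
* `D^j ∫ u_j^θ = (D^j v_j)^θ`.

These two facts alone imply the embedding, which reads
`∫ (∑_j u_j^t)^{1/t} ≤ C ∑_j v_j` with `t = q / p₁`, for arbitrarily small `t`.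
Replace `v` by the majorant `w_j = ∑_{i ≤ j} (3/4)^{j-i} v_i` (`smoothSeq`), whose sum is at most
`4 ∑ v_j`, and put `B_j = D^j w_j`. Then `u_j ≤ B_j`, and `B_j` grows at least like `(3/2)^j`. The
geometric growth gives the pointwise inequality
`(∑_j u_j^t)^{1/t} ≤ C ∑_j B_j^{1-θ} u_j^θ` (`pointwise_bound`), obtained by splitting the sum on the
left at the level where `B_j` exceeds the right-hand sum. Integrating (`abstract_franke`),
`∫ ∑_j B_j^{1-θ} u_j^θ ≤ ∑_j B_j^{1-θ} D^{-j} B_j^θ = ∑_j w_j ≤ 4 ∑_j v_j`.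
No duality, interpolation, rearrangement or nestedness of the cubes is needed.
-/

open MeasureTheory ENNReal NNReal

noncomputable section

/-- The dyadic cube `Q_{j,m}` in `ℝⁿ`: centered at `2^{-j} m`, with sides parallel to the
coordinate axes and side length `2^{-j}`. -/
def Qcube (n : ℕ) (j : ℕ) (m : Fin n → ℤ) : Set (EuclideanSpace ℝ (Fin n)) :=
  {x | ∀ i, (2 : ℝ) ^ (-(j : ℝ)) * ((m i : ℝ) - 1 / 2) ≤ x i ∧
        x i < (2 : ℝ) ^ (-(j : ℝ)) * ((m i : ℝ) + 1 / 2)}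

/-- The `L_p` (quasi)norm of an `ℝ≥0∞`-valued function, `0 < p ≤ ∞`, with the essential
supremum when `p = ∞`. -/
def lpNormE {α : Type*} [MeasurableSpace α] (μ : Measure α) (p : ℝ≥0∞)
    (f : α → ℝ≥0∞) : ℝ≥0∞ :=
  if p = ∞ then essSup f μ else (∫⁻ x, f x ^ p.toReal ∂μ) ^ (1 / p.toReal)

/-- The `ℓ_q` (quasi)norm of an `ℝ≥0∞`-valued family, with the supremum when `q = ∞`. -/
def ellqNorm {ι : Type*} (q : ℝ≥0∞) (a : ι → ℝ≥0∞) : ℝ≥0∞ :=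
  if q = ∞ then ⨆ i, a i else (∑' i, a i ^ q.toReal) ^ (1 / q.toReal)

/-- The Besov sequence quasinorm
`‖γ | b^s_{p,q}‖ = (Σ_j 2^{jsq} ‖Σ_m |γ_{j,m}| χ_{j,m}‖_{L_p}^q)^{1/q}`. -/
def bSeqNorm (n : ℕ) (s : ℝ) (p q : ℝ≥0∞) (γ : ℕ → (Fin n → ℤ) → ℂ) : ℝ≥0∞ :=
  ellqNorm q fun j : ℕ =>
    (2 : ℝ≥0∞) ^ ((j : ℝ) * s) *
      lpNormE volume p fun x =>
        ∑' m : Fin n → ℤ, (‖γ j m‖₊ : ℝ≥0∞) * (Qcube n j m).indicator (fun _ => (1 : ℝ≥0∞)) x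

/-- The Triebel–Lizorkin sequence quasinorm
`‖γ | f^s_{p,q}‖ = ‖(Σ_j Σ_m 2^{jsq}|γ_{j,m}|^q χ_{j,m}(·))^{1/q}‖_{L_p}`. -/
def fSeqNorm (n : ℕ) (s : ℝ) (p q : ℝ≥0∞) (γ : ℕ → (Fin n → ℤ) → ℂ) : ℝ≥0∞ :=
  lpNormE volume p fun x =>
    ellqNorm q fun jm : ℕ × (Fin n → ℤ) =>
      (2 : ℝ≥0∞) ^ ((jm.1 : ℝ) * s) * (‖γ jm.1 jm.2‖₊ : ℝ≥0∞) *
        (Qcube n jm.1 jm.2).indicator (fun _ => (1 : ℝ≥0∞)) x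

/-! ### Geometrically growing sequences -/

theorem geom_const (r : ℝ≥0∞) (hr : r < 1) : ∃ K : ℝ≥0∞, K ≠ ∞ ∧ K = r * K + 1 := by
  refine ⟨∑' k : ℕ, r ^ k, ?_, ?_⟩
  · rw [ENNReal.tsum_geometric]
    simp [tsub_eq_zero_iff_le, hr]
  · rw [← ENNReal.tsum_mul_left]
    conv_lhs => rw [tsum_eq_zero_add' ENNReal.summable]
    simp [pow_succ', add_comm]

/-- The terms of a geometrically growing sequence that stay below a threshold `Z` are dominated
by their last one, hence by `Z`. -/
theorem lower_sum (ρ K Z : ℝ≥0∞) (s : ℝ) (hs : 0 < s) (hρ : ρ < 1) (hK : K = ρ ^ s * K + 1)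
    (B : ℕ → ℝ≥0∞) (hB : ∀ j, B j ≤ ρ * B (j + 1)) :
    ∑' j, (if B j ≤ Z then B j ^ s else 0) ≤ K * Z ^ s := by
  -- Replacing `Z` by `min (B N) Z` is what makes the induction on `N` close.
  have key : ∀ N, ∑ j ∈ Finset.range (N + 1), (if B j ≤ Z then B j ^ s else 0)
      ≤ K * (min (B N) Z) ^ s := by
    intro N
    induction N with
    | zero =>
      simp only [zero_add, Finset.range_one, Finset.sum_singleton]
      split_ifs with h
      · rw [min_eq_left h]
        refine le_mul_of_one_le_left' ?_
        rw [hK]; exact le_add_self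
      · simp
    | succ N ih =>
      rw [Finset.sum_range_succ]
      split_ifs with h
      · rw [min_eq_left h]
        calc _ ≤ K * (ρ * B (N + 1)) ^ s + B (N + 1) ^ s := by
              gcongr
              refine ih.trans ?_
              gcongr
              exact (min_le_left _ _).trans (hB N)
          _ = (ρ ^ s * K + 1) * B (N + 1) ^ s := by
              rw [ENNReal.mul_rpow_of_nonneg _ _ hs.le]; ring
          _ = _ := by rw [← hK]
      · rw [add_zero]
        refine ih.trans ?_
        gcongr
        exact (hB N).trans (mul_le_of_le_one_left' hρ.le)
  refine ENNReal.tsum_le_of_sum_range_le fun N => ?_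
  refine (Finset.sum_le_sum_of_subset (Finset.range_mono (Nat.le_succ N))).trans ((key N).trans ?_)
  gcongr
  exact min_le_right _ _

/-- The terms of a geometrically growing sequence that exceed a threshold `Z ≠ 0` have reciprocals
dominated by the first one, hence by `Z⁻¹`. -/
theorem upper_sum (ρ K Z : ℝ≥0∞) (s : ℝ) (hs : 0 < s) (hK : K = ρ ^ s * K + 1)
    (hZ : Z ≠ 0) (B : ℕ → ℝ≥0∞) (hfin : ∀ j, B j ≠ ∞) (hB : ∀ j, B j ≤ ρ * B (j + 1)) :
    ∑' j, (if Z < B j then (Z / B j) ^ s else 0) ≤ K := by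
  -- The induction peels off the first term and shifts `B`, so it must run over all sequences;
  -- the factor `min 1 (Z / B 0)` records where the sequence starts.
  have key : ∀ N, ∀ B : ℕ → ℝ≥0∞, (∀ j, B j ≠ ∞) → (∀ j, B j ≤ ρ * B (j + 1)) →
      ∑ j ∈ Finset.range N, (if Z < B j then (Z / B j) ^ s else 0)
      ≤ K * (min 1 (Z / B 0)) ^ s := by
    intro N
    induction N with
    | zero => simp
    | succ N ih =>
      intro B hfin hB
      rw [Finset.sum_range_succ']
      have h1 := ih (fun j => B (j + 1)) (fun j => hfin (j + 1)) (fun j => hB (j + 1))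
      refine (add_le_add_left h1 _).trans ?_
      split_ifs with h
      · have h2 : Z / B 0 ≤ 1 := ENNReal.div_le_of_le_mul (by simpa using h.le)
        rw [min_eq_right h2]
        have h3 : Z / B 1 ≤ ρ * (Z / B 0) := by
          refine ENNReal.div_le_of_le_mul ?_
          calc Z = (Z / B 0) * B 0 := (ENNReal.div_mul_cancel (ne_bot_of_gt h) (hfin 0)).symm
            _ ≤ (Z / B 0) * (ρ * B 1) := by gcongr; exact hB 0
            _ = _ := by ring
        calc _ ≤ K * (ρ * (Z / B 0)) ^ s + (Z / B 0) ^ s := by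
              gcongr
              exact (min_le_right _ _).trans h3
          _ = (ρ ^ s * K + 1) * (Z / B 0) ^ s := by
              rw [ENNReal.mul_rpow_of_nonneg _ _ hs.le]; ring
          _ = _ := by rw [← hK]
      · have h2 : 1 ≤ Z / B 0 := by
          rw [ENNReal.le_div_iff_mul_le (Or.inr hZ) (Or.inl (hfin 0)), one_mul]
          exact not_lt.mp h
        rw [add_zero, min_eq_left h2]
        gcongr
        exact min_le_left _ _
  refine ENNReal.tsum_le_of_sum_range_le fun N => (key N B hfin hB).trans ?_
  calc _ ≤ K * 1 ^ s := by gcongr; exact min_le_left _ _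
    _ = K := by simp

/-- If `u j ≤ B j` and `B` grows geometrically, the `ℓ_t` quasinorm of `u` is controlled, for
every `t > 0`, by the single weighted sum `Z = ∑ B ^ (1 - θ) u ^ θ`. The levels with `B j ≤ Z` use
`u j ≤ B j`; those with `B j > Z` use `B j ^ (1 - θ) * u j ^ θ ≤ Z`, that is
`u j ≤ Z * (Z / B j) ^ ((1 - θ) / θ)`. Both are geometric sums. -/
theorem pointwise_bound (ρ : ℝ≥0∞) (t θ : ℝ) (hρ : ρ < 1) (ht : 0 < t) (hθ : 0 < θ)
    (hθ1 : θ < 1) :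
    ∃ C : ℝ≥0∞, C ≠ ∞ ∧ ∀ B u : ℕ → ℝ≥0∞, (∀ j, B j ≠ ∞) → (∀ j, B j ≤ ρ * B (j + 1)) →
      (∀ j, u j ≤ B j) →
      (∑' j, u j ^ t) ^ (1 / t) ≤ C * ∑' j, B j ^ (1 - θ) * u j ^ θ := by
  set σ : ℝ := (1 - θ) / θ * t with hσ
  have h1θ : 0 < 1 - θ := by linarith
  have hσ0 : 0 < σ := by positivity
  obtain ⟨K₁, hK₁, hK₁'⟩ := geom_const (ρ ^ t) (ENNReal.rpow_lt_one hρ ht)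
  obtain ⟨K₂, hK₂, hK₂'⟩ := geom_const (ρ ^ σ) (ENNReal.rpow_lt_one hρ hσ0)
  refine ⟨(K₁ + K₂) ^ (1 / t),
    ENNReal.rpow_ne_top_of_nonneg (by positivity) (ENNReal.add_ne_top.2 ⟨hK₁, hK₂⟩), ?_⟩
  intro B u hfin hB hu
  set Z := ∑' j, B j ^ (1 - θ) * u j ^ θ with hZdef
  have hle : ∀ j, B j ^ (1 - θ) * u j ^ θ ≤ Z := fun j => ENNReal.le_tsum j
  rcases eq_or_ne Z 0 with hZ | hZ
  · have hu0 : ∀ j, u j = 0 := by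
      intro j
      have := hle j
      rw [hZ, nonpos_iff_eq_zero, mul_eq_zero] at this
      rcases this with h | h
      · have := hu j
        rwa [(ENNReal.rpow_eq_zero_iff_of_pos h1θ).1 h, nonpos_iff_eq_zero] at this
      · exact (ENNReal.rpow_eq_zero_iff_of_pos hθ).1 h
    simp [hu0, ht]
  have hterm : ∀ j, u j ^ t ≤ (if B j ≤ Z then B j ^ t else 0)
      + Z ^ t * (if Z < B j then (Z / B j) ^ σ else 0) := by
    intro j
    split_ifs with h h' h'
    · exact absurd h (not_le.2 h')
    · simpa using ENNReal.rpow_le_rpow (hu j) ht.le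
    · rw [zero_add]
      have hB0 : B j ≠ 0 := ne_bot_of_gt h'
      have h3 : u j ≤ Z * (Z / B j) ^ ((1 - θ) / θ) := by
        have h4 : u j ^ θ ≤ Z / B j ^ (1 - θ) := by
          rw [ENNReal.le_div_iff_mul_le (Or.inr hZ)
            (Or.inl (ENNReal.rpow_ne_top_of_nonneg h1θ.le (hfin j))), mul_comm]
          exact hle j
        have h5 : Z / B j ^ (1 - θ) = (Z * (Z / B j) ^ ((1 - θ) / θ)) ^ θ := by
          have hZtop : Z ≠ ∞ := (h'.trans_le le_top).ne
          rw [ENNReal.mul_rpow_of_nonneg _ _ hθ.le, ← ENNReal.rpow_mul, div_mul_cancel₀ _ hθ.ne',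
            ENNReal.div_rpow_of_nonneg _ _ h1θ.le, ← mul_div_assoc, ← ENNReal.rpow_add _ _ hZ hZtop]
          simp
        rw [h5] at h4
        exact (ENNReal.rpow_le_rpow_iff hθ).1 h4
      calc u j ^ t ≤ (Z * (Z / B j) ^ ((1 - θ) / θ)) ^ t := by gcongr
        _ = _ := by rw [ENNReal.mul_rpow_of_nonneg _ _ ht.le, ← ENNReal.rpow_mul]
    · exact absurd (not_le.1 h) h'
  have hsum : ∑' j, u j ^ t ≤ (K₁ + K₂) * Z ^ t := by
    calc ∑' j, u j ^ t ≤ _ := ENNReal.tsum_le_tsum hterm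
      _ = _ := by rw [ENNReal.tsum_add, ENNReal.tsum_mul_left]
      _ ≤ K₁ * Z ^ t + Z ^ t * K₂ := by
          gcongr
          · exact lower_sum ρ K₁ Z t ht hρ hK₁' B hB
          · exact upper_sum ρ K₂ Z σ hσ0 hK₂' hZ B hfin hB
      _ = _ := by ring
  calc _ ≤ ((K₁ + K₂) * Z ^ t) ^ (1 / t) := by gcongr
    _ = _ := by
      rw [ENNReal.mul_rpow_of_nonneg _ _ (by positivity), ← ENNReal.rpow_mul,
        mul_one_div_cancel ht.ne', ENNReal.rpow_one]

/-! ### The embedding in an abstract measure space -/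

/-- The sequence `∑_{i ≤ j} (3/4) ^ (j - i) * v i`: a majorant of `v` that decays at most by
the factor `3/4` per step, so that `D ^ j * smoothSeq v j` grows geometrically once `D ≥ 2`. -/
def smoothSeq (v : ℕ → ℝ≥0∞) : ℕ → ℝ≥0∞
  | 0 => v 0
  | j + 1 => (3 / 4) * smoothSeq v j + v (j + 1)

theorem le_smoothSeq (v : ℕ → ℝ≥0∞) (j : ℕ) : v j ≤ smoothSeq v j := by
  cases j with
  | zero => exact le_rfl
  | succ j => exact le_add_self

theorem smoothSeq_tsum (v : ℕ → ℝ≥0∞) : ∑' j, smoothSeq v j ≤ 4 * ∑' j, v j := by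
  have h4 : (3 / 4 : ℝ≥0∞) * 4 = 3 := ENNReal.div_mul_cancel (by simp) (by simp)
  refine ENNReal.tsum_le_of_sum_range_le fun N => ?_
  suffices h : ∑ j ∈ Finset.range N, smoothSeq v j ≤ 4 * ∑ j ∈ Finset.range N, v j by
    refine h.trans ?_
    gcongr
    exact ENNReal.sum_le_tsum _
  induction N with
  | zero => simp
  | succ N ih =>
    have h1 : ∑ j ∈ Finset.range N, v j ≤ ∑ j ∈ Finset.range (N + 1), v j :=
      Finset.sum_le_sum_of_subset (Finset.range_mono (Nat.le_succ N))
    calc ∑ j ∈ Finset.range (N + 1), smoothSeq v j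
        = (3 / 4) * ∑ j ∈ Finset.range N, smoothSeq v j + ∑ j ∈ Finset.range (N + 1), v j := by
          rw [Finset.sum_range_succ', Finset.sum_range_succ' v]
          simp only [smoothSeq, Finset.sum_add_distrib, Finset.mul_sum]
          ring
      _ ≤ (3 / 4) * (4 * ∑ j ∈ Finset.range (N + 1), v j) + ∑ j ∈ Finset.range (N + 1), v j := by
          gcongr
          exact ih.trans (by gcongr)
      _ = 4 * ∑ j ∈ Finset.range (N + 1), v j := by
          rw [← mul_assoc, h4]; ring

/-- The embedding stripped of the cubes. All that is used about the layers `u j` is a sup bound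
`D ^ j * v j` and the bound on `∫ u j ^ θ` that a set of measure `D ^ (-j)` would give. Here `Φ`
stands for the `p₁`-th power of the inner `ℓ_q` quasinorm; `hΦ` is supplied by
`ellq_pow_bound`. -/
theorem abstract_franke (D : ℝ≥0∞) (hD : 2 ≤ D) (hDtop : D ≠ ∞) (θ : ℝ) (hθ : 0 < θ) (hθ1 : θ < 1)
    {α : Type*} [MeasurableSpace α] (μ : Measure α) (C : ℝ≥0∞) (Φ : (ℕ → ℝ≥0∞) → ℝ≥0∞)
    (hΦ : ∀ B u : ℕ → ℝ≥0∞, (∀ j, B j ≠ ∞) → (∀ j, B j ≤ (2 / 3) * B (j + 1)) →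
      (∀ j, u j ≤ B j) → Φ u ≤ C * ∑' j, B j ^ (1 - θ) * u j ^ θ)
    (u : ℕ → α → ℝ≥0∞) (hu : ∀ j, Measurable (u j)) (v : ℕ → ℝ≥0∞) (hv : ∑' j, v j ≠ ∞)
    (hsup : ∀ j x, u j x ≤ D ^ j * v j)
    (hint : ∀ j, D ^ j * ∫⁻ x, u j x ^ θ ∂μ ≤ (D ^ j * v j) ^ θ) :
    ∫⁻ x, Φ (fun j => u j x) ∂μ ≤ C * (4 * ∑' j, v j) := by
  have h1θ : 0 < 1 - θ := by linarith
  have hD0 : D ≠ 0 := by rintro rfl; simp at hD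
  have hWfin : ∀ j, smoothSeq v j ≠ ∞ := by
    refine ENNReal.ne_top_of_tsum_ne_top (ne_top_of_le_ne_top ?_ (smoothSeq_tsum v))
    exact ENNReal.mul_ne_top (by simp) hv
  set B : ℕ → ℝ≥0∞ := fun j => D ^ j * smoothSeq v j with hBdef
  have hfin : ∀ j, B j ≠ ∞ := fun j => ENNReal.mul_ne_top (ENNReal.pow_ne_top hDtop) (hWfin j)
  have hB : ∀ j, B j ≤ (2 / 3) * B (j + 1) := by
    intro j
    have h : (1 : ℝ≥0∞) = (2 / 3) * (2 * (3 / 4)) := by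
      rw [← ENNReal.toReal_eq_toReal_iff' (by simp) (by finiteness)]
      norm_num
    calc B j = ((2 / 3) * (2 * (3 / 4))) * B j := by rw [← h, one_mul]
      _ = (2 / 3) * (D ^ j * 2 * ((3 / 4) * smoothSeq v j)) := by simp only [hBdef]; ring
      _ ≤ (2 / 3) * (D ^ j * D * ((3 / 4) * smoothSeq v j + v (j + 1))) := by
          gcongr
          exact le_self_add
      _ = _ := by simp only [hBdef, smoothSeq, pow_succ]
  have hvB : ∀ j, D ^ j * v j ≤ B j := fun j => by
    simp only [hBdef]; gcongr; exact le_smoothSeq v j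
  calc ∫⁻ x, Φ (fun j => u j x) ∂μ
      ≤ ∫⁻ x, C * ∑' j, B j ^ (1 - θ) * u j x ^ θ ∂μ :=
        lintegral_mono fun x => hΦ B _ hfin hB fun j => (hsup j x).trans (hvB j)
    _ = C * ∑' j, B j ^ (1 - θ) * ∫⁻ x, u j x ^ θ ∂μ := by
        have hm : ∀ j, Measurable fun x => B j ^ (1 - θ) * u j x ^ θ := fun j =>
          ((hu j).pow_const θ).const_mul _
        rw [lintegral_const_mul _ (Measurable.tsum hm),
          lintegral_tsum fun j => (hm j).aemeasurable]
        congr 2; ext j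
        rw [lintegral_const_mul _ ((hu j).pow_const θ)]
    _ ≤ C * ∑' j, smoothSeq v j := by
        gcongr with j
        have hDj0 : D ^ j ≠ 0 := pow_ne_zero _ hD0
        have hDjt : D ^ j ≠ ∞ := ENNReal.pow_ne_top hDtop
        rw [← ENNReal.mul_le_mul_iff_right hDj0 hDjt]
        calc D ^ j * (B j ^ (1 - θ) * ∫⁻ x, u j x ^ θ ∂μ)
            = B j ^ (1 - θ) * (D ^ j * ∫⁻ x, u j x ^ θ ∂μ) := by ring
          _ ≤ B j ^ (1 - θ) * B j ^ θ := by
              gcongr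
              exact (hint j).trans (by gcongr; exact hvB j)
          _ = B j := by
              rw [← ENNReal.rpow_add_of_nonneg _ _ h1θ.le hθ.le]; simp
    _ ≤ _ := by gcongr; exact smoothSeq_tsum v

/-! ### Dyadic cubes and the layers of a sequence -/

/-- The index `m` of the unique cube `Q_{j,m}` containing `x`. -/
def cubeIdx (n j : ℕ) (x : EuclideanSpace ℝ (Fin n)) : Fin n → ℤ :=
  fun i => ⌊(2 : ℝ) ^ j * x i + 1 / 2⌋

theorem mem_Qcube_iff (n j : ℕ) (m : Fin n → ℤ) (x : EuclideanSpace ℝ (Fin n)) :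
    x ∈ Qcube n j m ↔ m = cubeIdx n j x := by
  have h2 : (0 : ℝ) < 2 ^ j := by positivity
  simp only [Qcube, Set.mem_ofPred_eq, funext_iff, cubeIdx]
  refine forall_congr' fun i => ?_
  rw [eq_comm, Int.floor_eq_iff, Real.rpow_neg (by norm_num), Real.rpow_natCast,
    inv_mul_le_iff₀ h2, lt_inv_mul_iff₀ h2]
  constructor <;> rintro ⟨h, h'⟩ <;> constructor <;> linarith

theorem measurable_cubeIdx (n j : ℕ) : Measurable (cubeIdx n j) := by
  unfold cubeIdx
  refine measurable_pi_lambda _ fun i => ?_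
  exact Int.measurable_floor.comp (by fun_prop)

theorem measurableSet_Qcube (n j : ℕ) (m : Fin n → ℤ) : MeasurableSet (Qcube n j m) := by
  have : Qcube n j m = cubeIdx n j ⁻¹' {m} := by
    ext x; rw [mem_Qcube_iff, Set.mem_preimage, Set.mem_singleton_iff, eq_comm]
  rw [this]
  exact measurable_cubeIdx n j (measurableSet_singleton m)

theorem volume_Qcube (n j : ℕ) (m : Fin n → ℤ) :
    volume (Qcube n j m) = (2 : ℝ≥0∞) ^ (-((j : ℝ) * n)) := by
  have h := (EuclideanSpace.volume_preserving_symm_measurableEquiv_toLp (Fin n))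
  have hQ : Qcube n j m = (MeasurableEquiv.toLp 2 (Fin n → ℝ)).symm ⁻¹'
      (Set.univ.pi fun i => Set.Ico ((2 : ℝ) ^ (-(j : ℝ)) * ((m i : ℝ) - 1 / 2))
        ((2 : ℝ) ^ (-(j : ℝ)) * ((m i : ℝ) + 1 / 2))) := by
    ext x
    simp [Qcube, Set.mem_pi]
  rw [hQ, h.measure_preimage_equiv, Real.volume_pi_Ico]
  have : ∀ i, (2 : ℝ) ^ (-(j : ℝ)) * ((m i : ℝ) + 1 / 2)
      - (2 : ℝ) ^ (-(j : ℝ)) * ((m i : ℝ) - 1 / 2) = (2 : ℝ) ^ (-(j : ℝ)) := fun i => by ring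
  simp only [this, Finset.prod_const, Finset.card_univ, Fintype.card_fin]
  rw [← ENNReal.ofReal_rpow_of_pos (by norm_num), ← ENNReal.rpow_natCast, ← ENNReal.rpow_mul]
  simp

/-- The `j`-th layer `∑ m, |γ_{j,m}| χ_{j,m}` of `γ` (see `tsum_level`), evaluated through the
single cube of side `2^{-j}` that contains `x`. -/
def levelFun (n : ℕ) (γ : ℕ → (Fin n → ℤ) → ℂ) (j : ℕ) (x : EuclideanSpace ℝ (Fin n)) : ℝ≥0∞ :=
  (‖γ j (cubeIdx n j x)‖₊ : ℝ≥0∞)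

theorem measurable_levelFun (n : ℕ) (γ : ℕ → (Fin n → ℤ) → ℂ) (j : ℕ) :
    Measurable (levelFun n γ j) :=
  (measurable_of_countable fun m => (‖γ j m‖₊ : ℝ≥0∞)).comp (measurable_cubeIdx n j)

theorem tsum_level (n : ℕ) (γ : ℕ → (Fin n → ℤ) → ℂ) (j : ℕ) (x : EuclideanSpace ℝ (Fin n)) :
    ∑' m : Fin n → ℤ, (‖γ j m‖₊ : ℝ≥0∞) * (Qcube n j m).indicator (fun _ => (1 : ℝ≥0∞)) x
      = levelFun n γ j x := by
  rw [tsum_eq_single (cubeIdx n j x)]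
  · rw [Set.indicator_of_mem ((mem_Qcube_iff n j _ x).2 rfl), mul_one, levelFun]
  · intro m hm
    rw [Set.indicator_of_notMem (fun h => hm ((mem_Qcube_iff n j m x).1 h)), mul_zero]

/-- Bernstein-type inequality: a layer is constant on a cube of measure `2^{-jn}` around `x`, so
its value there is controlled by its `L_a` quasinorm. -/
theorem levelFun_le (n : ℕ) (γ : ℕ → (Fin n → ℤ) → ℂ) (j : ℕ) (a : ℝ) (ha : 0 < a)
    (x : EuclideanSpace ℝ (Fin n)) :
    levelFun n γ j x
      ≤ (2 : ℝ≥0∞) ^ ((j : ℝ) * n / a) * (∫⁻ y, levelFun n γ j y ^ a) ^ (1 / a) := by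
  have h1 : levelFun n γ j x ^ a * (2 : ℝ≥0∞) ^ (-((j : ℝ) * n)) ≤ ∫⁻ y, levelFun n γ j y ^ a := by
    rw [← volume_Qcube n j (cubeIdx n j x), ← setLIntegral_const]
    refine le_trans (le_of_eq ?_) (setLIntegral_le_lintegral (Qcube n j (cubeIdx n j x)) _)
    refine setLIntegral_congr_fun (measurableSet_Qcube n j _) fun y hy => ?_
    have := (mem_Qcube_iff n j _ y).1 hy
    simp only [levelFun, this]
  have h2 : levelFun n γ j x ^ a
      ≤ (2 : ℝ≥0∞) ^ ((j : ℝ) * n) * ∫⁻ y, levelFun n γ j y ^ a := by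
    rw [ENNReal.rpow_neg, ← div_eq_mul_inv] at h1
    rw [mul_comm]
    exact (ENNReal.div_le_iff_le_mul (Or.inl (by simp))
      (Or.inl (ENNReal.rpow_ne_top_of_nonneg (by positivity) (by simp)))).1 h1
  calc levelFun n γ j x = (levelFun n γ j x ^ a) ^ (1 / a) := by
        rw [← ENNReal.rpow_mul, mul_one_div_cancel ha.ne', ENNReal.rpow_one]
    _ ≤ _ := ENNReal.rpow_le_rpow h2 (by positivity)
    _ = _ := by
        rw [ENNReal.mul_rpow_of_nonneg _ _ (by positivity), ← ENNReal.rpow_mul, mul_one_div]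

/-- For fixed `x` only one cube per level contributes to the inner `ℓ_q` quasinorm of `fSeqNorm`,
so the family over pairs `(j, m)` may be replaced by the family of layers. -/
theorem ellqNorm_level (n : ℕ) (s : ℝ) (q : ℝ≥0∞) (hq : 0 < q) (γ : ℕ → (Fin n → ℤ) → ℂ)
    (x : EuclideanSpace ℝ (Fin n)) :
    ellqNorm q (fun jm : ℕ × (Fin n → ℤ) =>
      (2 : ℝ≥0∞) ^ ((jm.1 : ℝ) * s) * (‖γ jm.1 jm.2‖₊ : ℝ≥0∞) *
        (Qcube n jm.1 jm.2).indicator (fun _ => (1 : ℝ≥0∞)) x)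
      = ellqNorm q fun j : ℕ => (2 : ℝ≥0∞) ^ ((j : ℝ) * s) * levelFun n γ j x := by
  have hin : ∀ j, (Qcube n j (cubeIdx n j x)).indicator (fun _ => (1 : ℝ≥0∞)) x = 1 := fun j =>
    Set.indicator_of_mem ((mem_Qcube_iff n j _ x).2 rfl) _
  have hout : ∀ j m, m ≠ cubeIdx n j x →
      (Qcube n j m).indicator (fun _ => (1 : ℝ≥0∞)) x = 0 := fun j m hm =>
    Set.indicator_of_notMem (fun h => hm ((mem_Qcube_iff n j m x).1 h)) _
  unfold ellqNorm
  split_ifs with h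
  · rw [iSup_prod]
    congr 1; ext j
    refine le_antisymm (iSup_le fun m => ?_) (le_iSup_of_le (cubeIdx n j x) ?_)
    · by_cases hm : m = cubeIdx n j x
      · subst hm; simp [hin, levelFun]
      · simp [hout j m hm]
    · simp [hin, levelFun]
  · have hq' : 0 < q.toReal := ENNReal.toReal_pos hq.ne' h
    congr 1
    rw [ENNReal.tsum_prod']
    congr 1; ext j
    rw [tsum_eq_single (cubeIdx n j x)]
    · simp [hin, levelFun]
    · intro m hm
      simp [hout j m hm, hq']

/-- `pointwise_bound` in terms of `ellqNorm`, including `q = ∞`, where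
`u j = u j ^ (1 - θ) * u j ^ θ ≤ B j ^ (1 - θ) * u j ^ θ` suffices. -/
theorem ellq_pow_bound (q : ℝ≥0∞) (hq : 0 < q) (b θ : ℝ) (hb : 0 < b) (hθ : 0 < θ) (hθ1 : θ < 1) :
    ∃ C : ℝ≥0∞, C ≠ ∞ ∧ ∀ B u : ℕ → ℝ≥0∞, (∀ j, B j ≠ ∞) → (∀ j, B j ≤ (2 / 3) * B (j + 1)) →
      (∀ j, u j ≤ B j) →
      ellqNorm q (fun j => u j ^ (1 / b)) ^ b ≤ C * ∑' j, B j ^ (1 - θ) * u j ^ θ := by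
  have h1θ : 0 < 1 - θ := by linarith
  by_cases h : q = ∞
  · refine ⟨1, by simp, fun B u _ _ hu => ?_⟩
    simp only [ellqNorm, h, if_true, one_mul]
    rw [← ENNReal.le_rpow_inv_iff hb]
    refine iSup_le fun j => ?_
    rw [one_div]
    gcongr
    calc u j = u j ^ (1 - θ) * u j ^ θ := by
          rw [← ENNReal.rpow_add_of_nonneg _ _ h1θ.le hθ.le]; simp
      _ ≤ B j ^ (1 - θ) * u j ^ θ := by gcongr; exact hu j
      _ ≤ _ := ENNReal.le_tsum (f := fun j => B j ^ (1 - θ) * u j ^ θ) j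
  · have hq' : 0 < q.toReal := ENNReal.toReal_pos hq.ne' h
    have hρ : (2 / 3 : ℝ≥0∞) < 1 := by
      rw [ENNReal.div_lt_iff (by simp) (by simp)]; norm_num
    obtain ⟨C, hC, H⟩ := pointwise_bound (2 / 3) (q.toReal / b) θ hρ (by positivity) hθ hθ1
    refine ⟨C, hC, fun B u h1 h2 h3 => le_trans (le_of_eq ?_) (H B u h1 h2 h3)⟩
    simp only [ellqNorm, h, if_false]
    rw [← ENNReal.rpow_mul]
    congr 1
    · congr 1; ext j
      rw [← ENNReal.rpow_mul]; congr 1; ring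
    · field_simp

/-! ### The embedding -/

/-- **Franke embedding, constant exponents, sequence-space version.**
If `s₁ < s₀`, `0 < p₀ < p₁ < ∞`, `0 < q ≤ ∞` and `s₀ - n/p₀ = s₁ - n/p₁`, then
`b^{s₀}_{p₀,p₁}(ℝⁿ) ↪ f^{s₁}_{p₁,q}(ℝⁿ)`. -/
theorem franke_embedding_constant_exponents (n : ℕ) (hn : 0 < n)
    (s₀ s₁ : ℝ) (p₀ p₁ q : ℝ≥0∞)
    (hs : s₁ < s₀) (hp₀ : 0 < p₀) (hp₀p₁ : p₀ < p₁) (hp₁ : p₁ < ∞) (hq : 0 < q)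
    (hsobolev : s₀ - n * (p₀⁻¹).toReal = s₁ - n * (p₁⁻¹).toReal) :
    ∃ C : ℝ≥0, 0 < C ∧ ∀ γ : ℕ → (Fin n → ℤ) → ℂ,
      fSeqNorm n s₁ p₁ q γ ≤ C * bSeqNorm n s₀ p₀ p₁ γ := by
  have hp₁' : p₁ ≠ ∞ := hp₁.ne
  have hp₀' : p₀ ≠ ∞ := (hp₀p₁.trans hp₁).ne
  rw [ENNReal.toReal_inv, ENNReal.toReal_inv] at hsobolev
  have ha : 0 < p₀.toReal := ENNReal.toReal_pos hp₀.ne' hp₀'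
  have hab : p₀.toReal < p₁.toReal := (ENNReal.toReal_lt_toReal hp₀' hp₁').2 hp₀p₁
  set a := p₀.toReal with ha_def
  set b := p₁.toReal with hb_def
  have hb : 0 < b := ha.trans hab
  have hθ : 0 < a / b := by positivity
  have hθ1 : a / b < 1 := (div_lt_one hb).2 hab
  obtain ⟨C, hC, H⟩ := ellq_pow_bound q hq b (a / b) hb hθ hθ1
  -- The summand `1` only serves to make the constant positive.
  set K : ℝ≥0∞ := (C * 4 + 1) ^ (1 / b) with hK
  have hCt : C * 4 + 1 ≠ ∞ := by finiteness
  have hKt : K ≠ ∞ := ENNReal.rpow_ne_top_of_nonneg (by positivity) hCt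
  have hK0 : K ≠ 0 := by
    rw [hK, Ne, ENNReal.rpow_eq_zero_iff_of_pos (by positivity)]
    simp
  refine ⟨K.toNNReal, ENNReal.toNNReal_pos hK0 hKt, fun γ => ?_⟩
  rw [ENNReal.coe_toNNReal hKt]
  set I : ℕ → ℝ≥0∞ := fun j => ∫⁻ y, levelFun n γ j y ^ a with hI
  set v : ℕ → ℝ≥0∞ := fun j => ((2 : ℝ≥0∞) ^ ((j : ℝ) * s₀) * I j ^ (1 / a)) ^ b with hv
  have hbnorm : bSeqNorm n s₀ p₀ p₁ γ = (∑' j, v j) ^ (1 / b) := by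
    simp only [bSeqNorm, ellqNorm, lpNormE, hp₁', hp₀', if_false, tsum_level, hv, hI, ha_def, hb_def]
  have hfnorm : fSeqNorm n s₁ p₁ q γ = (∫⁻ x, ellqNorm q
      (fun j : ℕ => (2 : ℝ≥0∞) ^ ((j : ℝ) * s₁) * levelFun n γ j x) ^ b) ^ (1 / b) := by
    simp only [fSeqNorm, lpNormE, hp₁', if_false, ellqNorm_level n s₁ q hq, hb_def]
  rw [hbnorm, hfnorm, hK, ← ENNReal.mul_rpow_of_nonneg _ _ (by positivity)]
  refine ENNReal.rpow_le_rpow ?_ (by positivity)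
  rcases eq_or_ne (∑' j, v j) ∞ with hvt | hvt
  · rw [hvt, ENNReal.mul_top (by simp)]
    exact le_top
  -- `u j` is the `p₁`-th power of the `j`-th layer of the `f`-quasinorm and `v j` the `p₁`-th
  -- power of the `j`-th term of the `b`-quasinorm; the exponent in `abstract_franke` is `p₀ / p₁`.
  set u : ℕ → EuclideanSpace ℝ (Fin n) → ℝ≥0∞ :=
    fun j x => ((2 : ℝ≥0∞) ^ ((j : ℝ) * s₁) * levelFun n γ j x) ^ b with hu
  have hD : ∀ j : ℕ, ((2 : ℝ≥0∞) ^ n) ^ j = (2 : ℝ≥0∞) ^ ((j : ℝ) * n) := by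
    intro j
    rw [← pow_mul, ← ENNReal.rpow_natCast]
    congr 1; push_cast; ring
  have hadd : ∀ y z : ℝ, (2 : ℝ≥0∞) ^ y * (2 : ℝ≥0∞) ^ z = (2 : ℝ≥0∞) ^ (y + z) := fun y z =>
    (ENNReal.rpow_add y z (by simp) (by simp)).symm
  have hmain := abstract_franke ((2 : ℝ≥0∞) ^ n)
    (by simpa using pow_le_pow_right₀ (one_le_two : (1 : ℝ≥0∞) ≤ 2) hn)
    (ENNReal.pow_ne_top (by simp)) (a / b) hθ hθ1 volume C
    (fun u => ellqNorm q (fun j => u j ^ (1 / b)) ^ b) H u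
    (fun j => ((measurable_levelFun n γ j).const_mul _).pow_const b) v hvt ?_ ?_
  · have hroot : ∀ z : ℝ≥0∞, (z ^ b) ^ (1 / b) = z := fun z => by
      rw [← ENNReal.rpow_mul, mul_one_div_cancel hb.ne', ENNReal.rpow_one]
    simp only [hu, hroot] at hmain
    refine hmain.trans ?_
    rw [← mul_assoc]
    gcongr
    exact le_self_add
  · intro j x
    calc u j x ≤ ((2 : ℝ≥0∞) ^ ((j : ℝ) * s₁)
          * ((2 : ℝ≥0∞) ^ ((j : ℝ) * n / a) * I j ^ (1 / a))) ^ b := by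
          simp only [hu]
          gcongr
          exact levelFun_le n γ j a ha x
      _ = ((2 : ℝ≥0∞) ^ ((j : ℝ) * n / b) * ((2 : ℝ≥0∞) ^ ((j : ℝ) * s₀) * I j ^ (1 / a))) ^ b := by
          rw [← mul_assoc, ← mul_assoc, hadd, hadd]
          congr 3
          linear_combination (-(j : ℝ)) * hsobolev
      _ = _ := by
          rw [ENNReal.mul_rpow_of_nonneg _ _ hb.le, ← ENNReal.rpow_mul, hD,
            div_mul_cancel₀ _ hb.ne']
  · intro j
    refine le_of_eq ?_
    have h1 : ∫⁻ x, u j x ^ (a / b) = (2 : ℝ≥0∞) ^ ((j : ℝ) * s₁ * a) * I j := by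
      rw [hI, ← lintegral_const_mul _ ((measurable_levelFun n γ j).pow_const a)]
      refine lintegral_congr fun x => ?_
      simp only [hu]
      rw [← ENNReal.rpow_mul, mul_div_cancel₀ _ hb.ne', ENNReal.mul_rpow_of_nonneg _ _ ha.le,
        ← ENNReal.rpow_mul]
    have h2 : v j ^ (a / b) = (2 : ℝ≥0∞) ^ ((j : ℝ) * s₀ * a) * I j := by
      simp only [hv]
      rw [← ENNReal.rpow_mul, mul_div_cancel₀ _ hb.ne', ENNReal.mul_rpow_of_nonneg _ _ ha.le,
        ← ENNReal.rpow_mul, ← ENNReal.rpow_mul, one_div_mul_cancel ha.ne', ENNReal.rpow_one]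
    rw [ENNReal.mul_rpow_of_nonneg _ _ hθ.le, h1, h2, hD, ← ENNReal.rpow_mul, ← mul_assoc,
      ← mul_assoc, hadd, hadd]
    congr 2
    have h3 : (n : ℝ) + s₁ * a = n * (a / b) + s₀ * a := by
      have : (n : ℝ) * a⁻¹ * a = n := by rw [mul_assoc, inv_mul_cancel₀ ha.ne', mul_one]
      rw [div_eq_mul_inv]
      linear_combination (-a) * hsobolev - this
    linear_combination (j : ℝ) * h3

end
end

section
/- Discrete estimate I from the proof of the constant-exponent Franke embedding: Let n ∈ ℕ, 0 < p₀ < p₁ < ∞ and 0 < q ≤ min(1, p₀). There exists a constant C > 0 such that for every family (b_{j,l})_{j,l∈ℕ₀} of non-negative real numbers, ( Σ_{k=0}^∞ 2^{kn} ( Σ_{j=0}^∞ b_{j,j+k}^q )^{p₁/q} )^{1/p₁} ≤ C ( Σ_{j=0}^∞ 2^{−jn} ( Σ_{l=j}^∞ 2^{ln} b_{j,l}^{p₀} )^{p₁/p₀} )^{1/p₁}. -/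
/-!
Write `a j k = b j (j + k)`, `r = p₁ / p₀ > 1` and `δ = n (r - 1) > 0`. After this change of
variables the `p₁`-th power of the right-hand sum dominates `∑ₖ 2^{kn} ∑ⱼ 2^{jδ} a j k ^ p₁`,
because `∑ x ^ r ≤ (∑ x) ^ r` for `r ≥ 1` (`tsum_rpow_le_rpow_tsum`) and `2^{kn} ≤ 2^{knr}`.
The weight `2^{jδ}` grows geometrically, so no Hölder inequality is needed to dominate the
`ℓ^q`-norm in `j` by the weighted `ℓ^{p₁}`-norm: each term is at most a geometrically decaying
multiple of the whole weighted norm (`tsum_rpow_le_weighted`). The resulting constant is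
`C = D ^ (1 / q)` with `D = ∑ⱼ 2^{-jδq/p₁}`.
-/


open MeasureTheory ENNReal NNReal

theorem tsum_rpow_le_rpow_tsum (x : ℕ → ℝ≥0∞) {r : ℝ} (hr : 1 ≤ r) :
    ∑' k, x k ^ r ≤ (∑' k, x k) ^ r := by
  have key (y : ℝ≥0∞) : y ^ r = y * y ^ (r - 1) := by
    have h := ENNReal.rpow_add_of_nonneg (x := y) 1 (r - 1) zero_le_one (by linarith)
    rwa [ENNReal.rpow_one, add_sub_cancel] at h
  rw [key (∑' k, x k), ← ENNReal.tsum_mul_right]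
  refine ENNReal.tsum_le_tsum fun k => ?_
  rw [key (x k)]
  gcongr
  exact ENNReal.le_tsum k

theorem two_rpow_add (x y : ℝ) :
    (2 : ℝ≥0∞) ^ (x + y) = (2 : ℝ≥0∞) ^ x * (2 : ℝ≥0∞) ^ y :=
  ENNReal.rpow_add x y two_ne_zero ENNReal.ofNat_ne_top

theorem tsum_two_rpow_ne_top {ε : ℝ} (hε : 0 < ε) :
    ∑' j : ℕ, (2 : ℝ≥0∞) ^ (-((j : ℝ) * ε)) ≠ ∞ := by
  have h (j : ℕ) : (2 : ℝ≥0∞) ^ (-((j : ℝ) * ε)) = ((2 : ℝ≥0∞) ^ (-ε)) ^ j := by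
    rw [← ENNReal.rpow_natCast, ← ENNReal.rpow_mul]
    congr 1
    ring
  simp_rw [h]
  rw [ENNReal.tsum_geometric]
  refine ENNReal.inv_ne_top.2 (tsub_pos_of_lt ?_).ne'
  exact ENNReal.rpow_lt_one_of_one_lt_of_neg one_lt_two (by linarith)

/-- The `ℓ^q`-norm is dominated by a geometrically weighted `ℓ^p`-norm, since every single
term satisfies `a j ^ q ≤ 2^{-jδq/p} M ^ (q / p)`, with `M` the weighted sum on the right. -/
theorem tsum_rpow_le_weighted (a : ℕ → ℝ≥0∞) {p q δ : ℝ} (hp : 0 < p) (hq : 0 < q) :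
    (∑' j, a j ^ q) ^ (p / q) ≤
      (∑' j : ℕ, (2 : ℝ≥0∞) ^ (-((j : ℝ) * (δ * q / p)))) ^ (p / q) *
        ∑' j : ℕ, (2 : ℝ≥0∞) ^ ((j : ℝ) * δ) * a j ^ p := by
  set M := ∑' j : ℕ, (2 : ℝ≥0∞) ^ ((j : ℝ) * δ) * a j ^ p with hM
  have hM' : M = (M ^ (q / p)) ^ (p / q) := by
    rw [← ENNReal.rpow_mul, div_mul_div_cancel₀ hp.ne', div_self hq.ne', ENNReal.rpow_one]
  have hpq : 0 ≤ p / q := by positivity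
  rw [hM', ← ENNReal.mul_rpow_of_nonneg _ _ hpq, ← ENNReal.tsum_mul_right]
  refine ENNReal.rpow_le_rpow (ENNReal.tsum_le_tsum fun j => ?_) hpq
  have h1 : (2 : ℝ≥0∞) ^ ((j : ℝ) * δ) * a j ^ p ≤ M := ENNReal.le_tsum j
  calc a j ^ q = (2 : ℝ≥0∞) ^ (-((j : ℝ) * (δ * q / p))) *
        ((2 : ℝ≥0∞) ^ ((j : ℝ) * δ) * a j ^ p) ^ (q / p) := by
        rw [ENNReal.mul_rpow_of_nonneg _ _ (by positivity), ← ENNReal.rpow_mul,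
          ← ENNReal.rpow_mul, ← mul_assoc, ← two_rpow_add, mul_div_cancel₀ _ hp.ne']
        rw [show -((j : ℝ) * (δ * q / p)) + (j : ℝ) * δ * (q / p) = 0 by ring,
          ENNReal.rpow_zero, one_mul]
    _ ≤ _ := by gcongr

/-- **Discrete estimate I** from the proof of the constant-exponent Franke embedding:
for `0 < p₀ < p₁ < ∞` and `0 < q ≤ min(1,p₀)` there is `C > 0` such that for all
non-negative families `(b_{j,l})`,
`(Σ_k 2^{kn}(Σ_j b_{j,j+k}^q)^{p₁/q})^{1/p₁} ≤ C (Σ_j 2^{-jn}(Σ_{l≥j} 2^{ln} b_{j,l}^{p₀})^{p₁/p₀})^{1/p₁}`. -/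
theorem franke_discrete_estimate_I (n : ℕ) (hn : 0 < n) (p₀ p₁ q : ℝ)
    (hp₀ : 0 < p₀) (hp₀p₁ : p₀ < p₁) (hq₀ : 0 < q) (hq : q ≤ min 1 p₀) :
    ∃ C : ℝ≥0, 0 < C ∧ ∀ b : ℕ → ℕ → ℝ≥0∞,
      (∑' k : ℕ, (2 : ℝ≥0∞) ^ ((k : ℝ) * n) *
          (∑' j : ℕ, b j (j + k) ^ q) ^ (p₁ / q)) ^ (1 / p₁)
      ≤ C * (∑' j : ℕ, (2 : ℝ≥0∞) ^ (-((j : ℝ) * n)) *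
          (∑' l : ℕ, (2 : ℝ≥0∞) ^ (((j + l : ℕ) : ℝ) * n) * b j (j + l) ^ p₀)
            ^ (p₁ / p₀)) ^ (1 / p₁) := by
  have hp₁ : 0 < p₁ := hp₀.trans hp₀p₁
  have hr : 1 < p₁ / p₀ := (one_lt_div hp₀).2 hp₀p₁
  have hn' : (0 : ℝ) < n := by exact_mod_cast hn
  set δ : ℝ := n * (p₁ / p₀ - 1) with hδ
  have hδ0 : 0 < δ := mul_pos hn' (by linarith)
  set D : ℝ≥0∞ := ∑' j : ℕ, (2 : ℝ≥0∞) ^ (-((j : ℝ) * (δ * q / p₁))) with hD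
  have hDtop : D ≠ ∞ := tsum_two_rpow_ne_top (by positivity)
  have hD0 : 0 < D := by
    refine lt_of_lt_of_le ?_ (ENNReal.le_tsum 0)
    simp
  have hCtop : D ^ (1 / q) ≠ ∞ := ENNReal.rpow_ne_top_of_nonneg (by positivity) hDtop
  refine ⟨(D ^ (1 / q)).toNNReal,
    ENNReal.toNNReal_pos (ENNReal.rpow_pos hD0 hDtop).ne' hCtop, fun b => ?_⟩
  rw [ENNReal.coe_toNNReal hCtop]
  have hC : D ^ (1 / q) = (D ^ (p₁ / q)) ^ (1 / p₁) := by
    rw [← ENNReal.rpow_mul]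
    congr 1
    field_simp
  rw [hC, ← ENNReal.mul_rpow_of_nonneg _ _ (by positivity)]
  refine ENNReal.rpow_le_rpow ?_ (by positivity)
  calc ∑' k : ℕ, (2 : ℝ≥0∞) ^ ((k : ℝ) * n) * (∑' j : ℕ, b j (j + k) ^ q) ^ (p₁ / q)
      ≤ ∑' k : ℕ, D ^ (p₁ / q) * ∑' j : ℕ, (2 : ℝ≥0∞) ^ ((k : ℝ) * n) *
          ((2 : ℝ≥0∞) ^ ((j : ℝ) * δ) * b j (j + k) ^ p₁) := by
        refine ENNReal.tsum_le_tsum fun k => ?_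
        rw [ENNReal.tsum_mul_left, mul_left_comm]
        gcongr
        exact tsum_rpow_le_weighted (fun j => b j (j + k)) hp₁ hq₀
    _ = D ^ (p₁ / q) * ∑' j : ℕ, ∑' k : ℕ, (2 : ℝ≥0∞) ^ ((k : ℝ) * n) *
          ((2 : ℝ≥0∞) ^ ((j : ℝ) * δ) * b j (j + k) ^ p₁) := by
        rw [ENNReal.tsum_mul_left, ENNReal.tsum_comm]
    _ ≤ _ := by
        gcongr with j
        refine le_trans ?_ (mul_le_mul_right (tsum_rpow_le_rpow_tsum _ hr.le) _)
        rw [← ENNReal.tsum_mul_left]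
        refine ENNReal.tsum_le_tsum fun k => ?_
        rw [ENNReal.mul_rpow_of_nonneg _ _ (by positivity), ← ENNReal.rpow_mul,
          ← ENNReal.rpow_mul, mul_div_cancel₀ _ hp₀.ne',
          ← mul_assoc (_ ^ _) (_ ^ _) (_ ^ p₁), ← mul_assoc (_ ^ _) (_ ^ _) (_ ^ p₁),
          ← two_rpow_add, ← two_rpow_add]
        refine mul_le_mul_left (ENNReal.rpow_le_rpow_of_exponent_le one_le_two ?_) _
        -- The two exponents of `2` differ by `k n (p₁ / p₀ - 1) ≥ 0`.
        have h : 0 ≤ (k : ℝ) * δ := by positivity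
        rw [hδ] at h ⊢
        push_cast
        nlinarith
end
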